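/- arXiv:1808.05432 — 2 statements merged into one kernel-verified Lean document; each statement's English description precedes it below -/
import Mathlib

section
/- Let P ⊂ ℝ^d be a d-dimensional convex polytope whose facet hyperplanes are in directionally general position (i.e., any d of their unit normal vectors are linearly independent). Then P has a unique inscribed ball of maximal radius (unique inball). -/
/-!
The ball of radius `r ≥ 0` about `z` lies in `P` exactly when every margin `t i - ⟪z, u i⟫` is at
least `r`, so an inball is a maximizer over the compact set `P` of the least margin, which is a
continuous function of `z`. Suppose there are two distinct maximizers `z₁`, `z₂`, let `m` be their
midpoint and `A` the set of facets at distance exactly `r` from `m`. Each facet in `A` is also at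
distance `r` from `z₁` and `z₂`, so its normal is orthogonal to `z₁ - z₂`. Boundedness of `P` forces
at least `d` facets (`le_card_of_isBounded`), hence some `d`-element set `s` of facets is comparable
with `A`. By general position the normals in `s` form a basis. If `s ⊆ A`, the basis is orthogonal
to `z₁ - z₂ ≠ 0`, which is absurd. If `A ⊆ s`, some direction `v` has `⟪v, u i⟫ = -1` for all
`i ∈ s`, and moving `m` slightly along `v` makes all margins exceed `r`.
-/

open scoped RealInnerProductSpace

open Filter Topology

section

variable {d : ℕ} {ι : Type*} (u : ι → EuclideanSpace ℝ (Fin d)) (t : ι → ℝ)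

/-- The facet-wise description of inscribed balls. The hypothesis `0 ≤ r` is needed because a closed
ball of negative radius is empty. -/
lemma closedBall_subset_iff_margin (hu : ∀ i, ‖u i‖ = 1) (z : EuclideanSpace ℝ (Fin d)) {r : ℝ}
    (hr : 0 ≤ r) :
    Metric.closedBall z r ⊆ (⋂ i, {x | ⟪x, u i⟫ ≤ t i}) ↔ ∀ i, ⟪z, u i⟫ + r ≤ t i := by
  constructor
  · intro h i
    -- the point of the ball furthest in the direction `u i`
    have h1 : z + r • u i ∈ Metric.closedBall z r := by
      simp [norm_smul, hu, abs_of_nonneg hr]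
    have h2 := Set.mem_iInter.1 (h h1) i
    simpa [inner_add_left, real_inner_smul_left, real_inner_self_eq_norm_sq, hu] using h2
  · intro h x hx
    refine Set.mem_iInter.2 fun i => ?_
    have h1 : ⟪x - z, u i⟫ ≤ ‖x - z‖ * ‖u i‖ := real_inner_le_norm _ _
    rw [hu, mul_one, inner_sub_left] at h1
    have h2 : ‖x - z‖ ≤ r := by simpa [dist_eq_norm] using hx
    have h3 := h i
    change ⟪x, u i⟫ ≤ t i
    linarith

/-- The linear map recording the inner products of a vector with a family of vectors. -/
noncomputable def innerMap {κ : Type*} (w : κ → EuclideanSpace ℝ (Fin d)) :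
    EuclideanSpace ℝ (Fin d) →ₗ[ℝ] (κ → ℝ) :=
  LinearMap.pi fun i => (innerSL ℝ (w i)).toLinearMap

lemma innerMap_apply {κ : Type*} (w : κ → EuclideanSpace ℝ (Fin d))
    (x : EuclideanSpace ℝ (Fin d)) (i : κ) : innerMap w x i = ⟪x, w i⟫ := by
  simp [innerMap, real_inner_comm]

/-- A bounded nonempty intersection of halfspaces in dimension `d` involves at least `d` of them:
otherwise it contains a line orthogonal to all the normals. -/
lemma le_card_of_isBounded [Fintype ι]
    (hb : Bornology.IsBounded (⋂ i, {x | ⟪x, u i⟫ ≤ t i}))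
    (hne : (⋂ i, {x | ⟪x, u i⟫ ≤ t i}).Nonempty) : d ≤ Fintype.card ι := by
  by_contra! hlt
  have hker : LinearMap.ker (innerMap u) ≠ ⊥ :=
    LinearMap.ker_ne_bot_of_finrank_lt (by simpa using hlt)
  obtain ⟨v, hv, hv0⟩ := Submodule.exists_mem_ne_zero_of_ne_bot hker
  have hv' : ∀ i, ⟪v, u i⟫ = 0 := fun i => by
    rw [← innerMap_apply, LinearMap.mem_ker.1 hv]; rfl
  obtain ⟨x, hx⟩ := hne
  obtain ⟨C, hC⟩ := hb.exists_norm_le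
  have hpos : 0 < ‖v‖ := norm_pos_iff.2 hv0
  have hline : ∀ c : ℝ, ‖x + c • v‖ ≤ C := fun c => hC _ <| Set.mem_iInter.2 fun i => by
    have := Set.mem_iInter.1 hx i
    simpa [inner_add_left, real_inner_smul_left, hv'] using this
  have h0 : ‖x‖ ≤ C := hC x hx
  have hC0 : 0 ≤ C := (norm_nonneg _).trans h0
  -- a parameter for which the line has certainly left the ball of radius `C`
  have h1 := hline ((2 * C + 1) / ‖v‖)
  have h2 : ‖((2 * C + 1) / ‖v‖) • v‖ = 2 * C + 1 := by
    rw [norm_smul, Real.norm_of_nonneg (by positivity), div_mul_cancel₀ _ hpos.ne']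
  have h3 := norm_sub_le (x + ((2 * C + 1) / ‖v‖) • v) x
  rw [add_sub_cancel_left, h2] at h3
  linarith

/-- `d` linearly independent vectors in dimension `d` separate points through inner products. -/
lemma innerMap_injective {s : Finset ι} (hs : s.card = d)
    (h : LinearIndependent ℝ (fun i : s => u i)) :
    Function.Injective (innerMap fun i : s => u i) := by
  rw [← LinearMap.ker_eq_bot, LinearMap.ker_eq_bot']
  intro x hx
  have hspan := h.span_eq_top_of_card_eq_finrank' (by simp [hs])
  have hmem : x ∈ (Submodule.span ℝ (Set.range fun i : s => u i))ᗮ := by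
    rw [Submodule.mem_orthogonal']
    intro y hy
    induction hy using Submodule.span_induction with
    | mem y hy =>
      obtain ⟨i, rfl⟩ := hy
      rw [← innerMap_apply (fun i : s => u i), hx]; rfl
    | zero => simp
    | add a b _ _ ha hb => rw [inner_add_right, ha, hb, add_zero]
    | smul c a _ ha => rw [inner_smul_right, ha, mul_zero]
  rw [hspan, Submodule.top_orthogonal_eq_bot] at hmem
  simpa using hmem

lemma innerMap_surjective {s : Finset ι} (hs : s.card = d)
    (h : LinearIndependent ℝ (fun i : s => u i)) :
    Function.Surjective (innerMap fun i : s => u i) :=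
  (LinearMap.injective_iff_surjective_of_finrank_eq_finrank (by simp [hs])).1
    (innerMap_injective u hs h)

/-- If every margin at `m` is at least `r`, and those equal to `r` increase along `v`, then some
point near `m` has all margins greater than `r`. -/
lemma exists_forall_margin_lt [Fintype ι] {r : ℝ} {m v : EuclideanSpace ℝ (Fin d)}
    (hm : ∀ i, ⟪m, u i⟫ + r ≤ t i) (hv : ∀ i, ⟪m, u i⟫ + r = t i → ⟪v, u i⟫ < 0) :
    ∃ z : EuclideanSpace ℝ (Fin d), ∀ i, ⟪z, u i⟫ + r < t i := by
  have hev : ∀ᶠ ε : ℝ in 𝓝[>] 0, ∀ i, ⟪m + ε • v, u i⟫ + r < t i := by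
    refine eventually_all.2 fun i => ?_
    rcases (hm i).lt_or_eq with h | h
    · have hc : Continuous fun ε : ℝ => ⟪m + ε • v, u i⟫ + r := by fun_prop
      exact nhdsWithin_le_nhds (hc.continuousAt.eventually_lt_const (by simpa using h))
    · filter_upwards [self_mem_nhdsWithin] with ε hε
      have := mul_neg_of_pos_of_neg (Set.mem_Ioi.1 hε) (hv i h)
      rw [inner_add_left, real_inner_smul_left]
      linarith
  obtain ⟨ε, hε⟩ := hev.exists
  exact ⟨_, hε⟩

/-- Uniqueness of the center, assuming that no point has all its margins greater than `r`. -/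
lemma center_unique [Fintype ι] (hcard : d ≤ Fintype.card ι)
    (hgen : ∀ s : Finset ι, s.card = d → LinearIndependent ℝ (fun i : s => u i)) {r : ℝ}
    (hmax : ¬ ∃ z : EuclideanSpace ℝ (Fin d), ∀ i, ⟪z, u i⟫ + r < t i)
    {x y : EuclideanSpace ℝ (Fin d)}
    (hx : ∀ i, ⟪x, u i⟫ + r ≤ t i) (hy : ∀ i, ⟪y, u i⟫ + r ≤ t i) : x = y := by
  classical
  set m : EuclideanSpace ℝ (Fin d) := (1 / 2 : ℝ) • (x + y) with hmdef
  have hmi : ∀ i, ⟪m, u i⟫ = 1 / 2 * (⟪x, u i⟫ + ⟪y, u i⟫) := fun i => by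
    rw [hmdef, real_inner_smul_left, inner_add_left]
  set A : Finset ι := Finset.univ.filter fun i => ⟪m, u i⟫ + r = t i with hA
  rcases le_total A.card d with hle | hle
  · obtain ⟨s, hAs, -, hs⟩ := Finset.exists_subsuperset_card_eq (Finset.subset_univ A) hle
      (by simpa using hcard)
    obtain ⟨v, hv⟩ := innerMap_surjective u hs (hgen s hs) fun _ => -1
    refine absurd (exists_forall_margin_lt u t (m := m) (v := v) (fun i => ?_) fun i hi => ?_) hmax
    · have := hx i
      have := hy i
      rw [hmi]
      linarith
    · have hi' : i ∈ s := hAs (by simp [hA, hi])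
      have h1 := congrFun hv ⟨i, hi'⟩
      rw [innerMap_apply] at h1
      rw [h1]
      norm_num
  · obtain ⟨s, hsA, hs⟩ := Finset.exists_subset_card_eq hle
    refine innerMap_injective u hs (hgen s hs) (funext fun i => ?_)
    rw [innerMap_apply, innerMap_apply]
    have h1 : ⟪m, u i⟫ + r = t i := (Finset.mem_filter.1 (hsA i.2)).2
    rw [hmi] at h1
    have := hx i
    have := hy i
    linarith

end

/-- A `d`-polytope, given as an irredundant intersection of closed halfspaces with
unit outer normals `u i`, compact and with nonempty interior, whose facet hyperplanes
are in directionally general position (any `d` of the normals are linearly independent),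
has a unique inball (a unique largest inscribed ball). -/
theorem unique_inball_of_directionally_general_position
    (d : ℕ) (hd : 1 ≤ d) {ι : Type*} [Fintype ι]
    (u : ι → EuclideanSpace ℝ (Fin d)) (t : ι → ℝ)
    (hu : ∀ i, ‖u i‖ = 1)
    (P : Set (EuclideanSpace ℝ (Fin d)))
    (hP : P = ⋂ i, {x | ⟪x, u i⟫ ≤ t i})
    (hcomp : IsCompact P) (hint : (interior P).Nonempty)
    -- irredundancy: each halfspace corresponds to a facet
    (hirr : ∀ i, ∃ x, (∀ j, j ≠ i → ⟪x, u j⟫ ≤ t j) ∧ t i < ⟪x, u i⟫)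
    -- directionally general position
    (hgen : ∀ s : Finset ι, s.card = d → LinearIndependent ℝ (fun i : s => u i)) :
    ∃ r > 0, (∀ z' r', Metric.closedBall z' r' ⊆ P → r' ≤ r) ∧
      ∃! z : EuclideanSpace ℝ (Fin d), Metric.closedBall z r ⊆ P := by
  subst hP
  obtain ⟨x, hx⟩ := hint
  have hxP := interior_subset hx
  have hcard := le_card_of_isBounded u t hcomp.isBounded ⟨x, hxP⟩
  have : Nonempty ι := Fintype.card_pos_iff.1 (by omega)
  -- the least margin
  set f : EuclideanSpace ℝ (Fin d) → ℝ := fun z =>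
    Finset.univ.inf' Finset.univ_nonempty fun i => t i - ⟪z, u i⟫ with hf
  have hfc : Continuous f :=
    Continuous.finset_inf'_apply _ fun i _ => by fun_prop
  have hle : ∀ z r, r ≤ f z ↔ ∀ i, ⟪z, u i⟫ + r ≤ t i := fun z r => by
    simp only [hf, Finset.le_inf'_iff, Finset.mem_univ, true_implies, le_sub_iff_add_le']
  obtain ⟨z, hz, hzmax⟩ := hcomp.exists_isMaxOn ⟨x, hxP⟩ hfc.continuousOn
  have hbound : ∀ z' r', Metric.closedBall z' r' ⊆ (⋂ i, {x | ⟪x, u i⟫ ≤ t i}) → 0 ≤ r' →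
      r' ≤ f z := fun z' r' h h0 =>
    ((hle _ _).2 ((closedBall_subset_iff_margin u t hu z' h0).1 h)).trans
      (hzmax (h (Metric.mem_closedBall_self h0)))
  have hpos : 0 < f z := by
    obtain ⟨ε, hε, hball⟩ := Metric.nhds_basis_closedBall.mem_iff.1 (mem_interior_iff_mem_nhds.1 hx)
    exact hε.trans_le (hbound x ε hball hε.le)
  refine ⟨f z, hpos, fun z' r' h => ?_, z, ?_, fun y hy => ?_⟩
  · rcases le_total 0 r' with h0 | h0
    · exact hbound z' r' h h0
    · exact h0.trans hpos.le
  · exact (closedBall_subset_iff_margin u t hu z hpos.le).2 ((hle _ _).1 le_rfl)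
  · refine center_unique u t hcard hgen ?_
      ((closedBall_subset_iff_margin u t hu y hpos.le).1 hy) ((hle _ _).1 le_rfl)
    rintro ⟨w, hw⟩
    have hlt : f z < f w := by
      simp only [hf, Finset.lt_inf'_iff, Finset.mem_univ, true_implies]
      exact fun i => lt_sub_iff_add_lt'.2 (hw i)
    have hwle := (hle w (f w)).1 le_rfl
    have hw0 : 0 ≤ f w := hpos.le.trans hlt.le
    exact hlt.not_ge (hbound w (f w) ((closedBall_subset_iff_margin u t hu w hw0).2 hwle) hw0)
end

section
/- If A is the set of (d+1)-tuples ((u_1,τ_1),…,(u_{d+1},τ_{d+1})) for which the hyperplanes H(u_j,τ_j) are in general position and the projections v_1,…,v_{k+1} of u_1,…,u_{k+1} onto L = (span{u_{k+2},…,u_{d+1}})^⊥ are the OUTER normals of the induced k-simplex, then the sets T_ε(A), ε ∈ {−1,1}^{k+1}, are pairwise disjoint and their union covers the set of all tuples with hyperplanes in general position. -/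
/-!
Any `d` of the `d + 1` normals `u j` form a basis of `ℝ^d`, so the space of relations
`∑ c j • u j = 0` is a line, and every nonzero relation has all its coefficients nonzero. The
hyperplanes have no common point exactly because `∑ c j * τ j ≠ 0`, so there is a *unique* relation
with `∑ c j * τ j = 1` (`exists_normRel`, `NormRel.unique`).

In terms of the slacks `s j = τ j - ⟪x, u j⟫`, space is the hyperplane `∑ c j * s j = 1`, and `Δ` is
its part with `s j ≥ 0` for `j ≤ k` and `s j = 0` for `j > k`. This is nonempty and bounded if and
only if `c j > 0` for all `j ≤ k` (`nonempty_and_isBounded_iff`). Flipping signs by `ε` replaces `c`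
by `ε * c` (`NormRel.flip`). Hence exactly one sign choice makes all the `c j`, `j ≤ k`, positive,
and this gives both disjointness and covering.
-/

open scoped RealInnerProductSpace

/-- The nondegeneracy of the normals of hyperplanes in general position: any `d` of the `d + 1`
vectors are linearly independent. -/
def AnyIndep {d : ℕ} (u : Fin (d + 1) → EuclideanSpace ℝ (Fin d)) : Prop :=
  ∀ s : Finset (Fin (d + 1)), s.card = d → LinearIndependent ℝ (fun j : s => u j)

/-- `c` is a linear relation between the normals `ω j`.1, normalized by the offsets. -/
def NormRel {d : ℕ} (c : Fin (d + 1) → ℝ) (ω : Fin (d + 1) → EuclideanSpace ℝ (Fin d) × ℝ) :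
    Prop :=
  ∑ j, c j • (ω j).1 = 0 ∧ ∑ j, c j * (ω j).2 = 1

/-! ### Families of `d + 1` vectors, any `d` of them independent -/

section

variable {d : ℕ} {u : Fin (d + 1) → EuclideanSpace ℝ (Fin d)}

lemma AnyIndep.indep_erase (hu : AnyIndep u) (i : Fin (d + 1)) :
    LinearIndependent ℝ (fun j : (Finset.univ.erase i : Finset (Fin (d + 1))) => u j) :=
  hu _ (by simp)

/-- A relation with one vanishing coefficient is trivial. -/
lemma AnyIndep.eq_zero (hu : AnyIndep u) {c : Fin (d + 1) → ℝ} (hc : ∑ j, c j • u j = 0)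
    {i : Fin (d + 1)} (hi : c i = 0) : c = 0 := by
  have h := Fintype.linearIndependent_iff.1 (hu.indep_erase i) (fun j => c j) (by
    rw [Finset.sum_coe_sort (Finset.univ.erase i) (fun j => c j • u j),
      Finset.sum_erase _ (by simp [hi]), hc])
  funext j
  by_cases hj : j = i
  · simp [hj, hi]
  · exact h ⟨j, by simp [hj]⟩

/-- The basis of the ambient space formed by all vectors but the one of index `i`. -/
noncomputable def AnyIndep.basis (hu : AnyIndep u) (i : Fin (d + 1)) :
    Module.Basis (Finset.univ.erase i : Finset (Fin (d + 1))) ℝ (EuclideanSpace ℝ (Fin d)) :=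
  Module.Basis.mk (hu.indep_erase i) (by
    rw [(hu.indep_erase i).span_eq_top_of_card_eq_finrank' (by simp)])

lemma AnyIndep.basis_apply (hu : AnyIndep u) (i : Fin (d + 1))
    (j : (Finset.univ.erase i : Finset (Fin (d + 1)))) : hu.basis i j = u j := by
  simp [AnyIndep.basis]

/-- The vector `x` is determined by the inner products `⟪x, u j⟫`. -/
lemma AnyIndep.eq_zero_of_inner (hu : AnyIndep u) {x : EuclideanSpace ℝ (Fin d)}
    (hx : ∀ j, ⟪x, u j⟫ = 0) : x = 0 :=
  InnerProductSpace.ext_inner_right_basis (hu.basis 0) fun j => by simp [hu.basis_apply, hx]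

/-- The inner products `⟪y, u j⟫` can be prescribed for all `j ≠ i`. -/
lemma AnyIndep.exists_inner_off (hu : AnyIndep u) (i : Fin (d + 1)) (s : Fin (d + 1) → ℝ) :
    ∃ y, ∀ j, j ≠ i → ⟪y, u j⟫ = s j := by
  let f : EuclideanSpace ℝ (Fin d) →ₗ[ℝ] ℝ := (hu.basis i).constr ℝ fun j => s j
  refine ⟨(InnerProductSpace.toDual ℝ _).symm (LinearMap.toContinuousLinearMap f),
    fun j hj => ?_⟩
  rw [InnerProductSpace.toDual_symm_apply]
  have h := (hu.basis i).constr_basis ℝ (fun j => s j) ⟨j, by simp [hj]⟩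
  rw [hu.basis_apply] at h
  exact h

/-- The relation `c` is the only obstruction to prescribing all the inner products `⟪y, u j⟫`. -/
lemma AnyIndep.exists_inner (hu : AnyIndep u) {c : Fin (d + 1) → ℝ} (hc : ∑ j, c j • u j = 0)
    (hc0 : c ≠ 0) {s : Fin (d + 1) → ℝ} (hs : ∑ j, c j * s j = 0) : ∃ y, ∀ j, ⟪y, u j⟫ = s j := by
  obtain ⟨y, hy⟩ := hu.exists_inner_off 0 s
  refine ⟨y, fun j => ?_⟩
  by_cases hj : j = 0
  · subst hj
    have h1 : ∑ j, c j * ⟪y, u j⟫ = 0 := by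
      simpa [inner_sum, inner_smul_right] using congrArg (fun z => ⟪y, z⟫) hc
    have h2 : ∑ j, c j * (⟪y, u j⟫ - s j) = 0 := by
      simp [mul_sub, Finset.sum_sub_distrib, h1, hs]
    rw [Finset.sum_eq_single 0 (fun j _ hj => by simp [hy j hj]) (by simp)] at h2
    rcases mul_eq_zero.1 h2 with h | h
    · exact absurd (hu.eq_zero hc h) hc0
    · linarith
  · exact hy j hj

end

/-! ### The normalized relation and the simplex -/

section

variable {d : ℕ} {ω : Fin (d + 1) → EuclideanSpace ℝ (Fin d) × ℝ} {c : Fin (d + 1) → ℝ}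

lemma NormRel.ne_zero (hc : NormRel c ω) : c ≠ 0 := by
  rintro rfl
  simpa using hc.2

lemma NormRel.apply_ne_zero (hc : NormRel c ω) (hu : AnyIndep fun j => (ω j).1)
    (i : Fin (d + 1)) : c i ≠ 0 :=
  fun h => hc.ne_zero (hu.eq_zero hc.1 h)

lemma NormRel.unique (hu : AnyIndep fun j => (ω j).1) {c' : Fin (d + 1) → ℝ}
    (hc : NormRel c ω) (hc' : NormRel c' ω) : c = c' := by
  -- This combination of the two relations vanishes at the index `0`, hence everywhere.
  have h : (fun j => c' 0 * c j - c 0 * c' j) = 0 := by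
    refine hu.eq_zero (i := 0) ?_ (by ring)
    simp [sub_smul, Finset.sum_sub_distrib, mul_smul, ← Finset.smul_sum, hc.1, hc'.1]
  have h0 : c' 0 = c 0 := by
    have h1 : ∑ j, (c' 0 * c j - c 0 * c' j) * (ω j).2 = 0 :=
      Finset.sum_eq_zero fun j _ => by simp [congrFun h j]
    simp only [sub_mul, Finset.sum_sub_distrib, mul_assoc, ← Finset.mul_sum, hc.2, hc'.2] at h1
    linarith
  funext j
  have hj : c' 0 * c j - c 0 * c' j = 0 := congrFun h j
  rw [h0, ← mul_sub] at hj
  rcases mul_eq_zero.1 hj with h | h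
  · exact absurd h (hc.apply_ne_zero hu 0)
  · linarith

lemma exists_normRel (hu : AnyIndep fun j => (ω j).1)
    (he : (⋂ j, {x : EuclideanSpace ℝ (Fin d) | ⟪x, (ω j).1⟫ = (ω j).2}) = ∅) :
    ∃ c, NormRel c ω := by
  have hdep : ¬ LinearIndependent ℝ (fun j => (ω j).1) := fun h => by
    simpa using h.fintype_card_le_finrank
  obtain ⟨g, hg, i, hi⟩ := Fintype.not_linearIndependent_iff.1 hdep
  have hg0 : g ≠ 0 := fun h => hi (congrFun h i)
  have hS : ∑ j, g j * (ω j).2 ≠ 0 := fun hS => by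
    obtain ⟨y, hy⟩ := hu.exists_inner hg hg0 hS
    have : y ∈ (⋂ j, {x : EuclideanSpace ℝ (Fin d) | ⟪x, (ω j).1⟫ = (ω j).2}) := by
      simpa using hy
    simp [he] at this
  refine ⟨fun j => (∑ j, g j * (ω j).2)⁻¹ * g j, ?_, ?_⟩
  · simp [mul_smul, ← Finset.smul_sum, hg]
  · simp only [mul_assoc, ← Finset.mul_sum]
    exact inv_mul_cancel₀ hS

/-- The slacks `τ j - ⟪x, u j⟫` of a point `x` have `c`-weighted sum `1`. -/
lemma NormRel.sum_slack (hc : NormRel c ω) (x : EuclideanSpace ℝ (Fin d)) :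
    ∑ j, c j * ((ω j).2 - ⟪x, (ω j).1⟫) = 1 := by
  have h1 : ∑ j, c j * ⟪x, (ω j).1⟫ = 0 := by
    simpa [inner_sum, inner_smul_right] using congrArg (fun z => ⟪x, z⟫) hc.1
  simp [mul_sub, Finset.sum_sub_distrib, h1, hc.2]

/-- The sign flips act on the normalized relation by multiplication. -/
lemma NormRel.flip (hc : NormRel c ω) {ε : Fin (d + 1) → ℝ} (hε : ∀ j, ε j * ε j = 1) :
    NormRel (fun j => ε j * c j) (fun j => (ε j • (ω j).1, ε j * (ω j).2)) := by
  constructor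
  · rw [← hc.1]
    refine Finset.sum_congr rfl fun j _ => ?_
    rw [smul_smul, mul_right_comm, hε, one_mul]
  · rw [← hc.2]
    refine Finset.sum_congr rfl fun j _ => ?_
    linear_combination (c j * (ω j).2) * hε j

lemma AnyIndep.flip (hu : AnyIndep fun j => (ω j).1) {ε : Fin (d + 1) → ℝ}
    (hε : ∀ j, ε j * ε j = 1) : AnyIndep fun j => ε j • (ω j).1 := fun s hs =>
  (hu s hs).units_smul fun j => Units.mk0 (ε j) (left_ne_zero_of_mul_eq_one (hε j))

/-- The polyhedron `Δ` is nonempty and bounded if and only if the coefficients of the normalized relation at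
the facet indices are positive. -/
lemma nonempty_and_isBounded_iff (hu : AnyIndep fun j => (ω j).1) (hc : NormRel c ω) (k : ℕ)
    {D : Set (EuclideanSpace ℝ (Fin d))}
    (hD : D = {x | (∀ j : Fin (d + 1), (j : ℕ) < k + 1 → ⟪x, (ω j).1⟫ ≤ (ω j).2) ∧
           (∀ j : Fin (d + 1), k + 1 ≤ (j : ℕ) → ⟪x, (ω j).1⟫ = (ω j).2)}) :
    (D.Nonempty ∧ Bornology.IsBounded D) ↔ ∀ j : Fin (d + 1), (j : ℕ) < k + 1 → 0 < c j := by
  subst hD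
  constructor
  · rintro ⟨⟨x, hx, hx'⟩, hb⟩ i hi
    by_contra hneg
    have hci : c i < 0 := lt_of_le_of_ne (not_lt.1 hneg) (hc.apply_ne_zero hu i)
    obtain ⟨p, hp, hcp⟩ : ∃ p : Fin (d + 1), (p : ℕ) < k + 1 ∧ 0 < c p := by
      by_contra! hall
      have h1 := hc.sum_slack x
      have : ∑ j, c j * ((ω j).2 - ⟪x, (ω j).1⟫) ≤ 0 := by
        refine Finset.sum_nonpos fun j _ => ?_
        rcases lt_or_ge (j : ℕ) (k + 1) with hj | hj
        · exact mul_nonpos_of_nonpos_of_nonneg (hall j hj) (sub_nonneg.2 (hx j hj))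
        · simp [hx' j hj]
      linarith
    have hpi : p ≠ i := by
      rintro rfl
      linarith
    -- Coefficients of both signs give a direction `y` of recession of `Δ`.
    obtain ⟨y, hy⟩ := hu.exists_inner hc.1 hc.ne_zero
      (s := fun j => (if j = p then -(c p)⁻¹ else 0) + (if j = i then (c i)⁻¹ else 0)) (by
        simp [mul_add, Finset.sum_add_distrib, hcp.ne', hci.ne])
    have hyp : ⟪y, (ω p).1⟫ = -(c p)⁻¹ := by simp [hy, hpi]
    have hyle : ∀ j, ⟪y, (ω j).1⟫ ≤ 0 := fun j => by
      have h1 := inv_pos.2 hcp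
      have h2 := inv_lt_zero.2 hci
      rw [hy]
      split_ifs <;> linarith
    have hy0 : y ≠ 0 := by
      rintro rfl
      simp [hcp.ne'] at hyp
    have hmem : ∀ n : ℕ, x + (n : ℝ) • y ∈
        {x | (∀ j : Fin (d + 1), (j : ℕ) < k + 1 → ⟪x, (ω j).1⟫ ≤ (ω j).2) ∧
           (∀ j : Fin (d + 1), k + 1 ≤ (j : ℕ) → ⟪x, (ω j).1⟫ = (ω j).2)} := fun n => by
      refine ⟨fun j hj => ?_, fun j hj => ?_⟩
      · rw [inner_add_left, real_inner_smul_left]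
        have := mul_nonpos_of_nonneg_of_nonpos (Nat.cast_nonneg (α := ℝ) n) (hyle j)
        linarith [hx j hj]
      · have h1 : j ≠ p := by
          rintro rfl
          omega
        have h2 : j ≠ i := by
          rintro rfl
          omega
        rw [inner_add_left, real_inner_smul_left, hx' j hj, hy]
        simp [h1, h2]
    obtain ⟨M, hM⟩ := hb.exists_norm_le
    obtain ⟨n, hn⟩ := exists_nat_gt ((M + ‖x‖) / ‖y‖)
    rw [div_lt_iff₀ (norm_pos_iff.2 hy0)] at hn
    have h1 := hM _ (hmem n)
    have h2 : ‖(n : ℝ) • y‖ = n * ‖y‖ := by simp [norm_smul]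
    have h3 : ‖(n : ℝ) • y‖ ≤ ‖x + (n : ℝ) • y‖ + ‖x‖ := by
      simpa using norm_sub_le (x + (n : ℝ) • y) x
    linarith
  · intro hpos
    have h0 : 0 < c 0 := hpos 0 (by simp)
    constructor
    -- The vertex at which all slacks but the one of index `0` vanish.
    · obtain ⟨y, hy⟩ := hu.exists_inner hc.1 hc.ne_zero
        (s := fun j => (ω j).2 - if j = 0 then (c 0)⁻¹ else 0) (by
          simp [mul_sub, Finset.sum_sub_distrib, h0.ne', hc.2])
      refine ⟨y, fun j hj => ?_, fun j hj => ?_⟩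
      · rw [hy]
        have := inv_pos.2 h0
        split_ifs <;> linarith
      · have : j ≠ 0 := by
          rintro rfl
          simp at hj
        simp [hy, this]
    · let Φ : EuclideanSpace ℝ (Fin d) →ₗ[ℝ] (Fin (d + 1) → ℝ) :=
        LinearMap.pi fun j => (innerₗ (EuclideanSpace ℝ (Fin d))) (ω j).1
      have hΦ : ∀ x j, Φ x j = ⟪x, (ω j).1⟫ := fun x j => by simp [Φ, real_inner_comm]
      have hker : LinearMap.ker Φ = ⊥ := by
        rw [LinearMap.ker_eq_bot']
        intro x hx
        exact hu.eq_zero_of_inner fun j => by rw [← hΦ, hx]; rfl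
      obtain ⟨K, -, hK⟩ := Φ.exists_antilipschitzWith hker
      -- The slacks satisfy `0 ≤ s j ≤ (c j)⁻¹` or `s j = 0`, so `Φ` maps `Δ` into a box.
      refine (hK.isBounded_preimage (Metric.isBounded_Icc (fun j => (ω j).2 - |(c j)⁻¹|)
        (fun j => (ω j).2))).subset ?_
      rintro x ⟨hx, hx'⟩
      have hnn : ∀ j, 0 ≤ c j * ((ω j).2 - ⟪x, (ω j).1⟫) := fun j => by
        rcases lt_or_ge (j : ℕ) (k + 1) with hj | hj
        · exact mul_nonneg (hpos j hj).le (sub_nonneg.2 (hx j hj))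
        · simp [hx' j hj]
      refine ⟨fun j => ?_, fun j => ?_⟩
      · rw [hΦ]
        rcases lt_or_ge (j : ℕ) (k + 1) with hj | hj
        · have h1 : c j * ((ω j).2 - ⟪x, (ω j).1⟫) ≤ 1 := by
            rw [← hc.sum_slack x]
            exact Finset.single_le_sum (f := fun j => c j * ((ω j).2 - ⟪x, (ω j).1⟫))
              (fun j _ => hnn j) (Finset.mem_univ j)
          have h2 : (ω j).2 - ⟪x, (ω j).1⟫ ≤ (c j)⁻¹ := by
            rw [← one_div, le_div_iff₀ (hpos j hj)]
            linarith
          linarith [le_abs_self (c j)⁻¹]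
        · linarith [hx' j hj, abs_nonneg (c j)⁻¹]
      · rw [hΦ]
        rcases lt_or_ge (j : ℕ) (k + 1) with hj | hj
        · exact hx j hj
        · exact (hx' j hj).le

end

/-! ### Sign flips -/

/-- Let `A` be the set of `(d+1)`-tuples `((u j, τ j))_j` of (normal, offset)-pairs for
which the hyperplanes `H (u j) (τ j)` are in general position and the induced
intersection `Δ = L' ∩ ⋂_{j ≤ k} H⁻(u j, τ j)` (with `L' = ⋂_{j ≥ k+1} H (u j) (τ j)`)
is the induced `k`-simplex, i.e. is nonempty and bounded — equivalently, the
projections `v j` of the `u j` onto the direction space of `L'` are the OUTER normals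
of the induced simplex. Then the sets `T_ε(A)`, as `ε` ranges over the sign vectors in
`{-1,1}^{k+1}`, are pairwise disjoint and their union covers the set of all tuples
whose hyperplanes are in general position. (Indices are shifted by one against the
paper.) -/
theorem sign_flips_of_outer_normal_tuples_partition
    (d k : ℕ) (hd : 2 ≤ d) (hk : 1 ≤ k) (hkd : k ≤ d - 1)
    (genPos : (Fin (d + 1) → EuclideanSpace ℝ (Fin d) × ℝ) → Prop)
    (hgenPos : ∀ ω, genPos ω ↔
      (∀ j, ‖(ω j).1‖ = 1) ∧
      (∀ s : Finset (Fin (d + 1)), s.card = d →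
        LinearIndependent ℝ (fun j : s => (ω j).1)) ∧
      (⋂ j, {x : EuclideanSpace ℝ (Fin d) | ⟪x, (ω j).1⟫ = (ω j).2}) = ∅)
    (Δ : (Fin (d + 1) → EuclideanSpace ℝ (Fin d) × ℝ) → Set (EuclideanSpace ℝ (Fin d)))
    (hΔ : ∀ ω, Δ ω =
      {x | (∀ j : Fin (d + 1), (j : ℕ) < k + 1 → ⟪x, (ω j).1⟫ ≤ (ω j).2) ∧
           (∀ j : Fin (d + 1), k + 1 ≤ (j : ℕ) → ⟪x, (ω j).1⟫ = (ω j).2)})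
    (A : Set (Fin (d + 1) → EuclideanSpace ℝ (Fin d) × ℝ))
    (hA : A = {ω | genPos ω ∧ (Δ ω).Nonempty ∧ Bornology.IsBounded (Δ ω)})
    (T : (Fin (d + 1) → ℝ) → (Fin (d + 1) → EuclideanSpace ℝ (Fin d) × ℝ) →
      (Fin (d + 1) → EuclideanSpace ℝ (Fin d) × ℝ))
    (hT : ∀ ε ω j, T ε ω j = if (j : ℕ) < k + 1 then (ε j • (ω j).1, ε j * (ω j).2) else ω j)
    (signs : Set (Fin (d + 1) → ℝ))
    (hsigns : signs = {ε | ∀ j : Fin (d + 1),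
      if (j : ℕ) < k + 1 then ε j = 1 ∨ ε j = -1 else ε j = 1}) :
    (∀ ε ∈ signs, ∀ η ∈ signs, ε ≠ η → Disjoint (T ε '' A) (T η '' A)) ∧
    {ω | genPos ω} ⊆ ⋃ ε ∈ signs, T ε '' A := by
  have hsq : ∀ ε ∈ signs, ∀ j, ε j * ε j = 1 := fun ε hε j => by
    rw [hsigns] at hε
    have := hε j
    split_ifs at this
    · rcases this with h | h <;> simp [h]
    · simp [this]
  -- On `signs` the case distinction in `T` is redundant, as `ε j = 1` for the other indices.
  have hT' : ∀ ε ∈ signs, ∀ ω, T ε ω = fun j => (ε j • (ω j).1, ε j * (ω j).2) :=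
    fun ε hε ω => by
      rw [hsigns] at hε
      funext j
      rw [hT]
      have := hε j
      split_ifs at this ⊢ with h
      · rfl
      · simp [this]
  have hTT : ∀ ε ∈ signs, ∀ ω, T ε (T ε ω) = ω := fun ε hε ω => by
    simp only [hT' ε hε]
    funext j
    simp [smul_smul, ← mul_assoc, hsq ε hε j]
  have hrel : ∀ ω, genPos ω → AnyIndep (fun j => (ω j).1) ∧ ∃ c, NormRel c ω := fun ω h =>
    have h' := (hgenPos ω).1 h
    ⟨h'.2.1, exists_normRel h'.2.1 h'.2.2⟩
  constructor
  · intro ε hε η hη hne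
    rw [Set.disjoint_left]
    rintro _ ⟨a, ha, rfl⟩ ⟨b, hb, hab⟩
    rw [hA] at ha hb
    obtain ⟨hua, c, hc⟩ := hrel a ha.1
    obtain ⟨hub, c', hc'⟩ := hrel b hb.1
    have hcpos := (nonempty_and_isBounded_iff hua hc k (hΔ a)).1 ha.2
    have hcpos' := (nonempty_and_isBounded_iff hub hc' k (hΔ b)).1 hb.2
    have hrel' : NormRel (fun j => ε j * (η j * c' j)) a := by
      have h := hc'.flip (hsq η hη)
      rw [← hT' η hη b, hab] at h
      have h' := h.flip (hsq ε hε)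
      rwa [← hT' ε hε, hTT ε hε] at h'
    have heq := NormRel.unique hua hc hrel'
    apply hne
    rw [hsigns] at hε hη
    funext j
    have h1 := hε j
    have h2 := hη j
    have h3 : c j = ε j * (η j * c' j) := congrFun heq j
    split_ifs at h1 h2 with hj
    · have h4 := hcpos j hj
      have h5 := hcpos' j hj
      rcases h1 with h1 | h1 <;> rcases h2 with h2 | h2 <;> rw [h1, h2] at h3 ⊢ <;> linarith
    · rw [h1, h2]
  · intro ω hω
    obtain ⟨hu, c, hc⟩ := hrel ω hω
    let ε : Fin (d + 1) → ℝ := fun j => if (j : ℕ) < k + 1 then (if 0 < c j then 1 else -1) else 1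
    have hε : ε ∈ signs := by
      rw [hsigns]
      intro j
      simp only [ε]
      split_ifs <;> simp
    simp only [Set.mem_iUnion]
    refine ⟨ε, hε, T ε ω, ?_, hTT ε hε ω⟩
    have hu' := hu.flip (hsq ε hε)
    have hc' := hc.flip (hsq ε hε)
    rw [← hT' ε hε ω] at hc'
    have hue : AnyIndep fun j => (T ε ω j).1 := by
      rw [hT' ε hε ω]
      exact hu'
    rw [hA]
    refine ⟨(hgenPos _).2 ⟨fun j => ?_, hue, ?_⟩,
      (nonempty_and_isBounded_iff hue hc' k (hΔ _)).2 fun j hj => ?_⟩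
    · have h1 : |ε j| = 1 := by
        rcases mul_self_eq_one_iff.1 (hsq ε hε j) with h | h <;> simp [h]
      simp [hT' ε hε ω, norm_smul, h1, ((hgenPos ω).1 hω).1 j]
    · rw [← ((hgenPos ω).1 hω).2.2]
      refine Set.iInter_congr fun j => Set.ext fun x => ?_
      have h0 : ε j ≠ 0 := left_ne_zero_of_mul_eq_one (hsq ε hε j)
      simp [hT' ε hε ω, real_inner_smul_right, h0]
    · have h0 := hc.apply_ne_zero hu j
      simp only [ε, hj, if_true]
      split_ifs with h
      · simpa using h
      · have := lt_of_le_of_ne (not_lt.1 h) h0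
        linarith
end
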